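/- Every finitely generated commutative semigroup has maximal global cogrowth: if S is a commutative semigroup with a finite choice of generators X via π : X⁺ → S, then γ^{S,X} = |X|. -/

import Mathlib

/-!
Write `k = |X|`. There are at most `n * k ^ n` pairs of words of total length `n`, since such a
pair is recovered from its concatenation and the length of the first word; this bounds the rate
above by `k`.

For the lower bound, commutativity makes `π w` depend only on how often each letter occurs in `w`.
A word of length `m + 1` has at most `(m + 2) ^ k` such letter counts, so the Cauchy–Schwarz
inequality gives at least `k ^ n / (m + 2) ^ k` pairs of words of length `m + 1` with equal
image, where `n = 2 * (m + 1)`. The denominator is polynomial in `n` and does not affect the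
exponential rate.
-/

open Filter

/-- The global cogrowth function. -/
noncomputable def gammaFn {X : Type} {S : Type*} [Mul S]
    (π : FreeSemigroup X →ₙ* S) (n : ℕ) : ℕ :=
  Nat.card {p : FreeSemigroup X × FreeSemigroup X //
    p.1.length + p.2.length = n ∧ π p.1 = π p.2}

/-- The global cogrowth rate. -/
noncomputable def gammaRate {X : Type} {S : Type*} [Mul S]
    (π : FreeSemigroup X →ₙ* S) : ℝ :=
  Filter.atTop.limsup (fun n : ℕ => (gammaFn π n : ℝ) ^ (1 / (n : ℝ)))

/-- Pairs of words of total length `n`, encoded by the length of the first word (which is less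
than `n`, as words are nonempty) and the concatenation. -/
def encodePair {X : Type} {S : Type*} [Mul S] (π : FreeSemigroup X →ₙ* S) (n : ℕ)
    (p : {p : FreeSemigroup X × FreeSemigroup X //
      p.1.length + p.2.length = n ∧ π p.1 = π p.2}) : Fin n × List.Vector X n :=
  (⟨p.1.1.length, by
      have h := p.2.1
      simp only [FreeSemigroup.length] at h ⊢
      omega⟩,
   ⟨(p.1.1.head :: p.1.1.tail) ++ (p.1.2.head :: p.1.2.tail), by
      have h := p.2.1
      simp only [FreeSemigroup.length] at h
      simp only [List.length_append, List.length_cons]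
      omega⟩)

lemma encodePair_injective {X : Type} {S : Type*} [Mul S] (π : FreeSemigroup X →ₙ* S) (n : ℕ) :
    Function.Injective (encodePair π n) := by
  rintro ⟨⟨⟨a, l⟩, ⟨b, l'⟩⟩, h⟩ ⟨⟨⟨c, r⟩, ⟨d, r'⟩⟩, h'⟩ e
  have e1 : l.length + 1 = r.length + 1 := congrArg (fun q => q.1.val) e
  have e2 : (a :: l) ++ (b :: l') = (c :: r) ++ (d :: r') := congrArg (fun q => q.2.1) e
  obtain ⟨h1, h2⟩ := List.append_inj e2 (by simpa using e1)
  simp only [List.cons.injEq] at h1 h2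
  obtain ⟨rfl, rfl⟩ := h1
  obtain ⟨rfl, rfl⟩ := h2
  rfl

lemma finite_pairs {X : Type} {S : Type*} [Mul S] [Fintype X]
    (π : FreeSemigroup X →ₙ* S) (n : ℕ) :
    Finite {p : FreeSemigroup X × FreeSemigroup X //
      p.1.length + p.2.length = n ∧ π p.1 = π p.2} :=
  Finite.of_injective _ (encodePair_injective π n)

lemma gammaFn_le {X : Type} {S : Type*} [Mul S] [Fintype X]
    (π : FreeSemigroup X →ₙ* S) (n : ℕ) :
    gammaFn π n ≤ n * Fintype.card X ^ n := by
  have h := Nat.card_le_card_of_injective _ (encodePair_injective π n)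
  rw [Nat.card_eq_fintype_card (α := Fin n × List.Vector X n)] at h
  simpa [gammaFn, card_vector] using h

/-- Adjoining a unit to `S` lets `π w` be written as a product over the list of letters of `w`. -/
lemma coe_map_eq_prod {X : Type} {S : Type*} [CommSemigroup S]
    (π : FreeSemigroup X →ₙ* S) (w : FreeSemigroup X) :
    ((π w : S) : WithOne S) =
      ((w.head :: w.tail).map fun x => ((π (FreeSemigroup.of x) : S) : WithOne S)).prod := by
  induction w using FreeSemigroup.recOnMul with
  | ih1 x => simp [FreeSemigroup.of]
  | ih2 x y h1 h2 =>
    rw [map_mul, WithOne.coe_mul, h1, h2]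
    simp

lemma map_eq_of_perm {X : Type} {S : Type*} [CommSemigroup S]
    (π : FreeSemigroup X →ₙ* S) (v w : FreeSemigroup X)
    (h : (v.head :: v.tail).Perm (w.head :: w.tail)) : π v = π w := by
  apply WithOne.coe_injective
  rw [coe_map_eq_prod, coe_map_eq_prod]
  exact (h.map _).prod_eq

/-- By Cauchy–Schwarz, a map `f` from `A` to `B` has at least `|A| ^ 2 / |B|` collisions. -/
lemma card_sq_le_collisions {A B : Type*} [Fintype A] [Fintype B] [DecidableEq B] (f : A → B) :
    Fintype.card A ^ 2 ≤
      Fintype.card B * Fintype.card {p : A × A // f p.1 = f p.2} := by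
  classical
  have h1 : Fintype.card A = ∑ b : B, Fintype.card {a : A // f a = b} := by
    rw [← Fintype.card_sigma]
    exact Fintype.card_congr (Equiv.sigmaFiberEquiv f).symm
  have h2 : ∑ b : B, Fintype.card {a : A // f a = b} ^ 2 ≤
      Fintype.card {p : A × A // f p.1 = f p.2} := by
    simp_rw [sq, ← Fintype.card_prod]
    rw [← Fintype.card_sigma]
    refine Fintype.card_le_of_injective
      (fun s => ⟨(s.2.1.1, s.2.2.1), s.2.1.2.trans s.2.2.2.symm⟩) ?_
    rintro ⟨b, ⟨x, rfl⟩, ⟨y, hy⟩⟩ ⟨c, ⟨x', rfl⟩, ⟨y', hy'⟩⟩ e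
    simp only [Subtype.mk.injEq, Prod.mk.injEq] at e
    obtain ⟨rfl, rfl⟩ := e
    rfl
  rw [h1]
  refine sq_sum_le_card_mul_sum_sq.trans ?_
  exact Nat.mul_le_mul_left _ h2

lemma le_gammaFn {X : Type} {S : Type*} [CommSemigroup S] [Fintype X]
    (π : FreeSemigroup X →ₙ* S) (m : ℕ) :
    Fintype.card X ^ (2 * (m + 1)) ≤
      (m + 2) ^ Fintype.card X * gammaFn π (2 * (m + 1)) := by
  classical
  -- Words of length `m + 1` are pairs of a letter and a list of length `m`; `f` counts letters.
  let f : X × List.Vector X m → (X → Fin (m + 2)) := fun w x =>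
    ⟨(w.1 :: w.2.1).count x, by
      have := List.count_le_length (a := x) (l := w.1 :: w.2.1)
      rw [List.length_cons, w.2.2] at this
      omega⟩
  have h := card_sq_le_collisions f
  have := finite_pairs π (2 * (m + 1))
  have h2 : Fintype.card {p : (X × List.Vector X m) × (X × List.Vector X m) // f p.1 = f p.2} ≤
      gammaFn π (2 * (m + 1)) := by
    rw [← Nat.card_eq_fintype_card]
    refine Nat.card_le_card_of_injective
      (fun p => ⟨(⟨p.1.1.1, p.1.1.2.1⟩, ⟨p.1.2.1, p.1.2.2.1⟩), ?_, ?_⟩) ?_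
    · simp only [FreeSemigroup.length]
      rw [p.1.1.2.2, p.1.2.2.2]
      omega
    · apply map_eq_of_perm
      rw [List.perm_iff_count]
      intro x
      exact congrArg Fin.val (congrFun p.2 x)
    · rintro ⟨⟨⟨a, l⟩, ⟨b, l'⟩⟩, h⟩ ⟨⟨⟨c, r⟩, ⟨d, r'⟩⟩, h'⟩ e
      simp only [Subtype.mk.injEq, Prod.mk.injEq, FreeSemigroup.mk.injEq] at e
      obtain ⟨⟨rfl, e1⟩, ⟨rfl, e2⟩⟩ := e
      obtain rfl := Subtype.ext e1
      obtain rfl := Subtype.ext e2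
      rfl
  have h3 := h.trans (Nat.mul_le_mul_left _ h2)
  simp only [Fintype.card_prod, card_vector, Fintype.card_fun, Fintype.card_fin] at h3
  calc _ = (Fintype.card X * Fintype.card X ^ m) ^ 2 := by ring
    _ ≤ _ := h3

theorem stmt2 {X : Type} {S : Type*} [CommSemigroup S] [Fintype X] [Nonempty X]
    (π : FreeSemigroup X →ₙ* S) (hπ : Function.Surjective π) :
    gammaRate π = Fintype.card X := by
  set k := Fintype.card X with hk
  set u : ℕ → ℝ := fun n => (gammaFn π n : ℝ) ^ (1 / (n : ℝ)) with hu
  have hroot : Tendsto (fun n : ℕ => (n : ℝ) ^ (1 / (n : ℝ))) atTop (nhds 1) :=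
    tendsto_rpow_div.comp tendsto_natCast_atTop_atTop
  have hup : Tendsto (fun n : ℕ => (n : ℝ) ^ (1 / (n : ℝ)) * k) atTop (nhds (k : ℝ)) := by
    simpa using hroot.mul_const (k : ℝ)
  have hlow : Tendsto (fun n : ℕ => (k : ℝ) / ((n : ℝ) ^ (1 / (n : ℝ))) ^ k)
      atTop (nhds (k : ℝ)) := by
    have h := (tendsto_const_nhds (x := (k : ℝ))).div (hroot.pow k) (by simp)
    rw [one_pow, div_one] at h
    exact h
  have hle : ∀ᶠ n in atTop, u n ≤ (n : ℝ) ^ (1 / (n : ℝ)) * k := by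
    filter_upwards [eventually_gt_atTop 0] with n hn
    have h : (gammaFn π n : ℝ) ≤ n * (k : ℝ) ^ n := by exact_mod_cast gammaFn_le π n
    calc u n ≤ ((n : ℝ) * (k : ℝ) ^ n) ^ (1 / (n : ℝ)) := by
          exact Real.rpow_le_rpow (by positivity) h (by positivity)
      _ = _ := by
          rw [Real.mul_rpow (by positivity) (by positivity), one_div,
            Real.pow_rpow_inv_natCast (by positivity) hn.ne']
  have hge : ∀ m : ℕ, (k : ℝ) / (((2 * (m + 1) : ℕ) : ℝ) ^ (1 / ((2 * (m + 1) : ℕ) : ℝ))) ^ k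
      ≤ u (2 * (m + 1)) := by
    intro m
    have h0 : k ^ (2 * (m + 1)) ≤ (2 * (m + 1)) ^ k * gammaFn π (2 * (m + 1)) :=
      (le_gammaFn π m).trans (Nat.mul_le_mul_right _ (Nat.pow_le_pow_left (by omega) _))
    have hn : 0 < 2 * (m + 1) := by omega
    simp only [hu]
    generalize 2 * (m + 1) = n at h0 hn ⊢
    have hn' : (0 : ℝ) < n := by exact_mod_cast hn
    have h : (k : ℝ) ^ n ≤ (n : ℝ) ^ k * gammaFn π n := by exact_mod_cast h0
    rw [div_le_iff₀ (by positivity)]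
    calc (k : ℝ) = ((k : ℝ) ^ n) ^ (1 / (n : ℝ)) := by
          rw [one_div, Real.pow_rpow_inv_natCast (by positivity) hn.ne']
      _ ≤ ((n : ℝ) ^ k * gammaFn π n) ^ (1 / (n : ℝ)) :=
          Real.rpow_le_rpow (by positivity) h (by positivity)
      _ = _ := by
          rw [Real.mul_rpow (by positivity) (by positivity), mul_comm,
            Real.rpow_pow_comm (by positivity)]
  have hbdd : IsBoundedUnder (· ≤ ·) atTop u := hup.isBoundedUnder_le.mono_le hle
  have hcob : IsCoboundedUnder (· ≤ ·) atTop u :=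
    IsBoundedUnder.isCoboundedUnder_le
      (isBoundedUnder_of ⟨0, fun n => Real.rpow_nonneg (Nat.cast_nonneg _) _⟩)
  change limsup u atTop = k
  apply le_antisymm
  · rw [← hup.limsup_eq]
    exact limsup_le_limsup hle hcob hup.isBoundedUnder_le
  · refine le_of_forall_lt fun c hc => ?_
    obtain ⟨d, hcd, hdk⟩ := exists_between hc
    refine hcd.trans_le (le_limsup_of_frequently_le ?_ hbdd)
    -- The lower bound on `u` is available only along the even lengths `2 * (m + 1)`.
    rw [frequently_atTop]
    intro N
    obtain ⟨M, hM⟩ := eventually_atTop.1 (hlow.eventually (eventually_gt_nhds hdk))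
    exact ⟨2 * (max N M + 1), by omega, (hM _ (by omega)).le.trans (hge _)⟩
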